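/- Let s ≤ d be positive integers, M a positive integer, α₁,…,α_M positive reals, A a real s×d matrix of full rank s, and H₁,…,H_M invertible real s×s matrices. Then cond((√α₁·H₁·A | … | √α_M·H_M·A)) ≥ cond((H₁ | … | H_M)) · (min_m √α_m / max_m √α_m) · (1/cond(A)). -/

import Mathlib

/-!
For a matrix `X` let `q_X(v) = ‖vᵀ X‖²`, the quadratic form of `X Xᵀ`. By the spectral theorem
`σ_min(X)² ‖v‖² ≤ q_X(v) ≤ σ_max(X)² ‖v‖²`, and both bounds are attained at eigenvectors
(`sMin_sq_mul_le`, `le_sMax_sq_mul`, `exists_sMax`, `exists_sMin`).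

Write `B = (H₁ | … | H_M)`, `C = (√α₁ H₁ A | … | √α_M H_M A)`, `a = min √α_m`, `b = max √α_m`.
Since `q_C(v) = ∑ α_m q_A(H_mᵀ v)` and `q_B(v) = ∑ ‖H_mᵀ v‖²`, the bounds for `q_A` give
`(σ_min(A) a)² q_B ≤ q_C ≤ (σ_max(A) b)² q_B`. Comparing the extreme values of the two forms
(`sMax_ge_of_form_le`, `sMin_ge_of_form_le`, `sMin_le_of_form_le`) yields
`σ_max(C) ≥ σ_min(A) a σ_max(B)` and
`0 < σ_min(A) a σ_min(B) ≤ σ_min(C) ≤ σ_max(A) b σ_min(B)`. The claim is the quotient of the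
first and the last inequality.
-/

open Matrix MeasureTheory ProbabilityTheory Real

/-- The singular values of a real matrix `X` (indexed by the row type),
defined as the square roots of the eigenvalues of `X * Xᵀ`. -/
noncomputable def sVals {m n : Type*} [Fintype m] [DecidableEq m] [Fintype n]
    (X : Matrix m n ℝ) (i : m) : ℝ :=
  Real.sqrt ((Matrix.isHermitian_mul_conjTranspose_self X).eigenvalues i)

/-- The largest singular value of `X`. -/
noncomputable def sMax {m n : Type*} [Fintype m] [DecidableEq m] [Fintype n]
    (X : Matrix m n ℝ) : ℝ :=
  sSup (Set.range (sVals X))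

/-- The smallest singular value of `X`. -/
noncomputable def sMin {m n : Type*} [Fintype m] [DecidableEq m] [Fintype n]
    (X : Matrix m n ℝ) : ℝ :=
  sInf (Set.range (sVals X))

/-- The condition number of `X`: the ratio of its largest to smallest singular value. -/
noncomputable def condNum {m n : Type*} [Fintype m] [DecidableEq m] [Fintype n]
    (X : Matrix m n ℝ) : ℝ :=
  sMax X / sMin X

/-- The singular values of a matrix with rows indexed by `Fin s`, arranged in
nonincreasing order: `svdSorted X 0` is the largest, `svdSorted X (s-1)` the smallest. -/
noncomputable def svdSorted {s : ℕ} {n : Type*} [Fintype n]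
    (X : Matrix (Fin s) n ℝ) (i : Fin s) : ℝ :=
  sVals X (Tuple.sort (sVals X) i.rev)

/-- The multiset of singular values of `X` (with multiplicities). -/
noncomputable def svMultiset {m n : Type*} [Fintype m] [DecidableEq m] [Fintype n]
    (X : Matrix m n ℝ) : Multiset ℝ :=
  Finset.univ.val.map (sVals X)

/-- Horizontal block concatenation `(C 0 | C 1 | … | C (M-1))` of `M` matrices
with the same number of rows. -/
def blockRow {s d : Type*} (M : ℕ) (C : Fin M → Matrix s d ℝ) :
    Matrix s (Fin M × d) ℝ :=
  Matrix.of fun i p => C p.1 i p.2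

/-- The `s × d` matrix with ones on the main diagonal and zeros elsewhere. -/
def Isd (s d : ℕ) : Matrix (Fin s) (Fin d) ℝ :=
  Matrix.of fun i j => if (i : ℕ) = (j : ℕ) then (1 : ℝ) else 0

/-- The chi-squared distribution with `n` degrees of freedom, i.e. the Gamma
distribution with shape `n/2` and rate `1/2`. -/
noncomputable def chiSqMeasure (n : ℕ) : Measure ℝ :=
  gammaMeasure ((n : ℝ) / 2) (1 / 2)

section SingularValues

variable {m n n' : Type*} [Fintype m] [Fintype n] [Fintype n']

/-- The quadratic form `v ↦ ‖vᵀ X‖²` of `X Xᵀ`. -/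
def rowForm (X : Matrix m n ℝ) (v : m → ℝ) : ℝ := (v ᵥ* X) ⬝ᵥ (v ᵥ* X)

lemma rowForm_nonneg (X : Matrix m n ℝ) (v : m → ℝ) : 0 ≤ rowForm X v :=
  Finset.sum_nonneg fun _ _ => mul_self_nonneg _

lemma rowForm_eq (X : Matrix m n ℝ) (v : m → ℝ) :
    rowForm X v = v ⬝ᵥ ((X * Xᴴ) *ᵥ v) := by
  rw [rowForm, ← Matrix.mulVec_mulVec, Matrix.dotProduct_mulVec,
    Matrix.conjTranspose_eq_transpose_of_trivial, Matrix.mulVec_transpose]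

variable [DecidableEq m]

lemma sVals_nonneg (X : Matrix m n ℝ) (i : m) : 0 ≤ sVals X i := Real.sqrt_nonneg _

lemma sVals_sq (X : Matrix m n ℝ) (i : m) :
    sVals X i ^ 2 = (Matrix.isHermitian_mul_conjTranspose_self X).eigenvalues i :=
  Real.sq_sqrt ((Matrix.posSemidef_self_mul_conjTranspose X).eigenvalues_nonneg i)

lemma sMin_le_sVals (X : Matrix m n ℝ) (i : m) : sMin X ≤ sVals X i :=
  csInf_le (Set.finite_range _).bddBelow ⟨i, rfl⟩

lemma sVals_le_sMax (X : Matrix m n ℝ) (i : m) : sVals X i ≤ sMax X :=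
  le_csSup (Set.finite_range _).bddAbove ⟨i, rfl⟩

lemma sMin_nonneg (X : Matrix m n ℝ) : 0 ≤ sMin X :=
  Real.sInf_nonneg (by rintro _ ⟨i, rfl⟩; exact sVals_nonneg X i)

lemma sMax_nonneg (X : Matrix m n ℝ) : 0 ≤ sMax X :=
  Real.sSup_nonneg (by rintro _ ⟨i, rfl⟩; exact sVals_nonneg X i)

lemma sum_sq_coords (X : Matrix m n ℝ) (v : m → ℝ) :
    ∑ i, (inner ℝ (WithLp.toLp 2 v)
      ((Matrix.isHermitian_mul_conjTranspose_self X).eigenvectorBasis i)) ^ 2 = v ⬝ᵥ v := by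
  set hN := Matrix.isHermitian_mul_conjTranspose_self X
  have h := hN.eigenvectorBasis.sum_inner_mul_inner (WithLp.toLp 2 v) (WithLp.toLp 2 v)
  rw [EuclideanSpace.inner_eq_star_dotProduct] at h
  simp only [star_trivial] at h
  rw [← h]
  refine Finset.sum_congr rfl fun i _ => ?_
  rw [sq]
  congr 1
  exact real_inner_comm _ _

/-- The form of `X Xᵀ` is diagonal in an orthonormal eigenbasis, with the squared singular values
as coefficients. -/
lemma rowForm_eq_sum (X : Matrix m n ℝ) (v : m → ℝ) :
    rowForm X v = ∑ i, sVals X i ^ 2 * (inner ℝ (WithLp.toLp 2 v)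
      ((Matrix.isHermitian_mul_conjTranspose_self X).eigenvectorBasis i)) ^ 2 := by
  set hN := Matrix.isHermitian_mul_conjTranspose_self X with hNdef
  have h := hN.eigenvectorBasis.sum_inner_mul_inner (WithLp.toLp 2 v)
    (WithLp.toLp 2 ((X * Xᴴ) *ᵥ v))
  rw [rowForm_eq]
  have h2 : inner ℝ (WithLp.toLp 2 v) (WithLp.toLp 2 ((X * Xᴴ) *ᵥ v))
      = v ⬝ᵥ ((X * Xᴴ) *ᵥ v) := by
    rw [EuclideanSpace.inner_eq_star_dotProduct, dotProduct_comm]; simp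
  rw [← h2, ← h]
  refine Finset.sum_congr rfl fun i _ => ?_
  have h3 : inner ℝ (hN.eigenvectorBasis i) (WithLp.toLp 2 ((X * Xᴴ) *ᵥ v))
      = hN.eigenvalues i * inner ℝ (WithLp.toLp 2 v) (hN.eigenvectorBasis i) := by
    have h4 := hN.mulVec_eigenvectorBasis i
    have h5 : (X * Xᴴ)ᵀ = X * Xᴴ := by
      simp [Matrix.conjTranspose_eq_transpose_of_trivial]
    simp only [EuclideanSpace.inner_eq_star_dotProduct, star_trivial]
    rw [dotProduct_comm, Matrix.dotProduct_mulVec, ← Matrix.mulVec_transpose, h5, h4,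
      smul_dotProduct, smul_eq_mul]
  rw [h3, sVals_sq]
  ring

lemma sMin_sq_mul_le (X : Matrix m n ℝ) (v : m → ℝ) :
    sMin X ^ 2 * (v ⬝ᵥ v) ≤ rowForm X v := by
  rw [rowForm_eq_sum, ← sum_sq_coords X v, Finset.mul_sum]
  refine Finset.sum_le_sum fun i _ => mul_le_mul_of_nonneg_right ?_ (sq_nonneg _)
  exact pow_le_pow_left₀ (sMin_nonneg X) (sMin_le_sVals X i) 2

lemma le_sMax_sq_mul (X : Matrix m n ℝ) (v : m → ℝ) :
    rowForm X v ≤ sMax X ^ 2 * (v ⬝ᵥ v) := by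
  rw [rowForm_eq_sum, ← sum_sq_coords X v, Finset.mul_sum]
  refine Finset.sum_le_sum fun i _ => mul_le_mul_of_nonneg_right ?_ (sq_nonneg _)
  exact pow_le_pow_left₀ (sVals_nonneg X i) (sVals_le_sMax X i) 2

lemma exists_sVals (X : Matrix m n ℝ) (i : m) :
    ∃ v : m → ℝ, v ⬝ᵥ v = 1 ∧ rowForm X v = sVals X i ^ 2 := by
  set hN := Matrix.isHermitian_mul_conjTranspose_self X with hNdef
  have h1 : (hN.eigenvectorBasis i).ofLp ⬝ᵥ (hN.eigenvectorBasis i).ofLp = 1 := by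
    have := real_inner_self_eq_norm_sq (hN.eigenvectorBasis i)
    rw [hN.eigenvectorBasis.norm_eq_one, EuclideanSpace.inner_eq_star_dotProduct] at this
    simpa using this
  refine ⟨(hN.eigenvectorBasis i).ofLp, h1, ?_⟩
  rw [rowForm_eq, hN.mulVec_eigenvectorBasis, dotProduct_smul, h1, sVals_sq]
  simp

lemma exists_sMax [Nonempty m] (X : Matrix m n ℝ) :
    ∃ v : m → ℝ, v ⬝ᵥ v = 1 ∧ rowForm X v = sMax X ^ 2 := by
  obtain ⟨i, hi⟩ := (Set.range_nonempty (sVals X)).csSup_mem (Set.finite_range _)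
  obtain ⟨v, hv, h⟩ := exists_sVals X i
  exact ⟨v, hv, by rw [h, hi, sMax]⟩

lemma exists_sMin [Nonempty m] (X : Matrix m n ℝ) :
    ∃ v : m → ℝ, v ⬝ᵥ v = 1 ∧ rowForm X v = sMin X ^ 2 := by
  obtain ⟨i, hi⟩ := (Set.range_nonempty (sVals X)).csInf_mem (Set.finite_range _)
  obtain ⟨v, hv, h⟩ := exists_sVals X i
  exact ⟨v, hv, by rw [h, hi, sMin]⟩

lemma sMin_pos [Nonempty m] (X : Matrix m n ℝ) (h : ∀ v, v ᵥ* X = 0 → v = 0) :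
    0 < sMin X := by
  refine (sMin_nonneg X).lt_of_ne' fun h0 => ?_
  obtain ⟨v, hv, hX⟩ := exists_sMin X
  rw [h0, rowForm, zero_pow two_ne_zero, dotProduct_self_eq_zero] at hX
  rw [h v hX] at hv
  simp at hv

lemma sMin_le_sMax [Nonempty m] (X : Matrix m n ℝ) : sMin X ≤ sMax X :=
  (sMin_le_sVals X (Classical.arbitrary m)).trans (sVals_le_sMax X _)

lemma sMax_ge_of_form_le [Nonempty m] (X : Matrix m n ℝ) (Y : Matrix m n' ℝ) {c : ℝ}
    (h : ∀ v, c ^ 2 * rowForm X v ≤ rowForm Y v) : c * sMax X ≤ sMax Y := by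
  obtain ⟨v, hv, hX⟩ := exists_sMax X
  have h1 := (h v).trans (le_sMax_sq_mul Y v)
  rw [hv, hX, mul_one, ← mul_pow] at h1
  exact (le_abs_self _).trans (abs_le_of_sq_le_sq h1 (sMax_nonneg Y))

lemma sMin_ge_of_form_le [Nonempty m] (X : Matrix m n ℝ) (Y : Matrix m n' ℝ) {c : ℝ}
    (h : ∀ v, c ^ 2 * rowForm X v ≤ rowForm Y v) : c * sMin X ≤ sMin Y := by
  obtain ⟨v, hv, hY⟩ := exists_sMin Y
  have h1 := (mul_le_mul_of_nonneg_left (sMin_sq_mul_le X v) (sq_nonneg c)).trans (h v)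
  rw [hv, hY, mul_one, ← mul_pow] at h1
  exact (le_abs_self _).trans (abs_le_of_sq_le_sq h1 (sMin_nonneg Y))

lemma sMin_le_of_form_le [Nonempty m] (X : Matrix m n ℝ) (Y : Matrix m n' ℝ) {c : ℝ}
    (hc : 0 ≤ c) (h : ∀ v, rowForm Y v ≤ c ^ 2 * rowForm X v) : sMin Y ≤ c * sMin X := by
  obtain ⟨v, hv, hX⟩ := exists_sMin X
  have h1 := (sMin_sq_mul_le Y v).trans (h v)
  rw [hv, hX, mul_one, ← mul_pow] at h1
  exact (le_abs_self _).trans (abs_le_of_sq_le_sq h1 (mul_nonneg hc (sMin_nonneg X)))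

end SingularValues

lemma rowForm_blockRow {m n : Type*} [Fintype m] [Fintype n] {M : ℕ}
    (C : Fin M → Matrix m n ℝ) (v : m → ℝ) :
    rowForm (blockRow M C) v = ∑ k, rowForm (C k) v := by
  simp only [rowForm, dotProduct, Fintype.sum_prod_type]
  rfl

lemma rowForm_smul_mul {m n p : Type*} [Fintype m] [Fintype n] [Fintype p] (a : ℝ)
    (H : Matrix m p ℝ) (A : Matrix p n ℝ) (v : m → ℝ) :
    rowForm (Real.sqrt a • (H * A)) v = Real.sqrt a ^ 2 * rowForm A (v ᵥ* H) := by
  simp only [rowForm, Matrix.vecMul_smul, Matrix.vecMul_vecMul, smul_dotProduct,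
    dotProduct_smul, smul_eq_mul]
  ring

/-- For a full-rank `s × d` matrix `A`, invertible `s × s` matrices
`H₁, …, H_M` and positive reals `α₁, …, α_M`,
`cond((√α₁·H₁·A | … | √α_M·H_M·A)) ≥ cond((H₁ | … | H_M)) · (min_m √α_m / max_m √α_m) · (1/cond(A))`. -/
theorem cond_blockRow_scaled_HA_lower_bound {s d : ℕ} (hs : 0 < s) (hsd : s ≤ d)
    {M : ℕ} (hM : 0 < M) (α : Fin M → ℝ) (hα : ∀ m, 0 < α m)
    (A : Matrix (Fin s) (Fin d) ℝ) (hA : A.rank = s)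
    (H : Fin M → Matrix (Fin s) (Fin s) ℝ) (hH : ∀ m, IsUnit (H m)) :
    condNum (blockRow M fun m => Real.sqrt (α m) • (H m * A))
      ≥ condNum (blockRow M H)
        * ((⨅ m, Real.sqrt (α m)) / (⨆ m, Real.sqrt (α m)))
        * (condNum A)⁻¹ := by
  have : Nonempty (Fin s) := ⟨⟨0, hs⟩⟩
  have : Nonempty (Fin M) := ⟨⟨0, hM⟩⟩
  set C := blockRow M fun m => Real.sqrt (α m) • (H m * A) with hC
  set B := blockRow M H with hB
  set a := ⨅ m, Real.sqrt (α m) with ha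
  set b := ⨆ m, Real.sqrt (α m) with hb
  have ha_le (k) : a ≤ Real.sqrt (α k) := ciInf_le (Set.finite_range _).bddBelow k
  have hb_ge (k) : Real.sqrt (α k) ≤ b :=
    le_ciSup (f := fun m => Real.sqrt (α m)) (Set.finite_range _).bddAbove k
  have ha_pos : 0 < a := by
    obtain ⟨k, hk⟩ := exists_eq_ciInf_of_finite (f := fun m => Real.sqrt (α m))
    rw [ha, ← hk]
    exact Real.sqrt_pos.2 (hα k)
  have hb_pos : 0 < b := ha_pos.trans_le ((ha_le ⟨0, hM⟩).trans (hb_ge _))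
  have hA_pos : 0 < sMin A := by
    refine sMin_pos A fun v hv => ?_
    -- full row rank means independent rows, so `v ↦ vᵀ A` is injective
    have hli : LinearIndependent ℝ A.row := by
      rw [linearIndependent_iff_card_eq_finrank_span, Set.finrank, ← Matrix.rank_eq_finrank_span_row, hA,
        Fintype.card_fin]
    exact Matrix.vecMul_injective_iff.2 hli (by simpa using hv)
  have hB_pos : 0 < sMin B := by
    refine sMin_pos B fun v hv => ?_
    have h0 : v ᵥ* H ⟨0, hM⟩ = 0 := funext fun j => congrFun hv (⟨0, hM⟩, j)
    exact Matrix.vecMul_injective_of_isUnit (hH ⟨0, hM⟩) (by simpa using h0)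
  have hAmax_pos : 0 < sMax A := hA_pos.trans_le (sMin_le_sMax A)
  have hlow (v) : (sMin A * a) ^ 2 * rowForm B v ≤ rowForm C v := by
    rw [hB, hC, rowForm_blockRow, rowForm_blockRow, Finset.mul_sum]
    refine Finset.sum_le_sum fun k _ => ?_
    rw [rowForm_smul_mul, mul_pow, mul_comm (sMin A ^ 2), mul_assoc]
    exact mul_le_mul (pow_le_pow_left₀ ha_pos.le (ha_le k) 2) (sMin_sq_mul_le A _)
      (mul_nonneg (sq_nonneg _) (rowForm_nonneg _ _)) (sq_nonneg _)
  have hup (v) : rowForm C v ≤ (sMax A * b) ^ 2 * rowForm B v := by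
    rw [hB, hC, rowForm_blockRow, rowForm_blockRow, Finset.mul_sum]
    refine Finset.sum_le_sum fun k _ => ?_
    rw [rowForm_smul_mul, mul_pow, mul_comm (sMax A ^ 2), mul_assoc]
    exact mul_le_mul (pow_le_pow_left₀ (Real.sqrt_nonneg _) (hb_ge k) 2) (le_sMax_sq_mul A _)
      (rowForm_nonneg _ _) (sq_nonneg _)
  have h1 : sMin A * a * sMax B ≤ sMax C := sMax_ge_of_form_le B C hlow
  have h2 : sMin C ≤ sMax A * b * sMin B :=
    sMin_le_of_form_le B C (mul_pos hAmax_pos hb_pos).le hup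
  have hC_pos : 0 < sMin C :=
    (mul_pos (mul_pos hA_pos ha_pos) hB_pos).trans_le (sMin_ge_of_form_le B C hlow)
  calc condNum B * (a / b) * (condNum A)⁻¹
      = (sMin A * a * sMax B) / (sMax A * b * sMin B) := by
        rw [condNum, condNum]
        field_simp
    _ ≤ sMax C / sMin C := div_le_div₀ (sMax_nonneg C) h1 hC_pos h2
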